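/- Let φ be the elementary Nielsen automorphism of F(a,b) = F₂ given by a ↦ ab, b ↦ b, and define for each x ∈ {a, a⁻¹, b, b⁻¹} the number n(x) = cardinality of the reduced set U(x) from the fundamental formulas: n(a) = 1, n(a⁻¹) = 1, n(b) = 2, n(b⁻¹) = 2. Then for every reduced word w of length ≥ 1 ending in the letter x, the image φ(C¹_w) is a disjoint union of exactly n(x) cylinders. -/

import Mathlib

open FreeGroup

variable {α : Type*}

/-- Inverse of a letter `(x, b)` in the alphabet `A ∪ A⁻¹`. -/
def linv (x : α × Bool) : α × Bool := (x.1, !x.2)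

/-- The boundary `∂F(A)`: infinite reduced words over `A ∪ A⁻¹`. -/
def Bd (α : Type*) : Type _ := {ξ : ℕ → α × Bool // ∀ n, ξ (n + 1) ≠ linv (ξ n)}

/-- The cylinder `C¹_w` of all infinite reduced words with prefix `w`. -/
def Cyl (w : List (α × Bool)) : Set (Bd α) :=
  {ξ | ∀ i, (h : i < w.length) → ξ.1 i = w.get ⟨i, h⟩}

/-- The length-`m` prefix of an infinite reduced word. -/
def pre (ξ : Bd α) (m : ℕ) : List (α × Bool) := List.ofFn (fun i : Fin m => ξ.1 i)

/-- `Φ` is the boundary extension of the automorphism `φ`: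
for every `ξ ∈ ∂F(A)`, the reduced words `φ(ξ|_m)` converge to `Φ ξ`. -/
def ExtendsBd [DecidableEq α] (φ : FreeGroup α ≃* FreeGroup α) (Φ : Bd α → Bd α) : Prop :=
  ∀ ξ : Bd α, ∀ k : ℕ, ∃ n : ℕ, ∀ m, n ≤ m →
    ((φ (FreeGroup.mk (pre ξ m))).toWord).take k = List.ofFn (fun i : Fin k => (Φ ξ).1 i)

/-- `Concat g ξ η` : `η` is the reduced concatenation `g · ξ` (left translation of a
boundary point by a group element): some terminal segment of (the reduced word of) `g`
cancels against an initial segment of `ξ`, and `η` is the concatenation of the rest. -/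
def Concat [DecidableEq α] (g : FreeGroup α) (ξ η : Bd α) : Prop :=
  ∃ ℓ : ℕ, ∃ hℓ : ℓ ≤ g.toWord.length,
    (∀ i, (h : i < ℓ) → ξ.1 i = linv (g.toWord.get ⟨g.toWord.length - 1 - i, by omega⟩)) ∧
    (∀ n : ℕ, η.1 n =
      if h : n < g.toWord.length - ℓ then g.toWord.get ⟨n, by omega⟩
      else ξ.1 (n - (g.toWord.length - ℓ) + ℓ))

/-- The vertex `g` of the Cayley tree lies on the bi-infinite geodesic from `ξ` to `η`. -/
def OnGeod [DecidableEq α] (g : FreeGroup α) (ξ η : Bd α) : Prop :=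
  ∃ ξ' η' : Bd α, Concat g⁻¹ ξ ξ' ∧ Concat g⁻¹ η η' ∧ ξ'.1 0 ≠ η'.1 0

/-- The double cylinder `C²_{[v,w]}`. -/
def DblCyl [DecidableEq α] (v w : FreeGroup α) : Set (Bd α × Bd α) :=
  {p | p.1 ≠ p.2 ∧ OnGeod v p.1 p.2 ∧ OnGeod w p.1 p.2}

/-- Letter-permuting automorphism: every generator maps to a single letter. -/
def IsPermAut [DecidableEq α] (φ : FreeGroup α ≃* FreeGroup α) : Prop :=
  ∀ x : α, ((φ (FreeGroup.of x)).toWord).length = 1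

/-- Elementary Nielsen automorphism: `a ↦ ab`, all other generators fixed. -/
def IsNielsenAut (φ : FreeGroup α ≃* FreeGroup α) : Prop :=
  ∃ a b : α, a ≠ b ∧ φ (FreeGroup.of a) = FreeGroup.of a * FreeGroup.of b ∧
    ∀ x : α, x ≠ a → φ (FreeGroup.of x) = FreeGroup.of x


namespace NielsenAux

abbrev FB := FreeGroup Bool
abbrev La : Bool × Bool := (true, true)
abbrev LA : Bool × Bool := (true, false)

theorem app {g : FB} {y : Bool × Bool} (h : IsReduced (g.toWord ++ [y])) :
    (g * mk [y]).toWord = g.toWord ++ [y] := by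
  conv_lhs => rw [← mk_toWord (x := g), mul_mk, toWord_mk]
  exact h.reduce_eq

theorem red_snoc2 {l : List (Bool × Bool)} {x y : Bool × Bool} :
    IsReduced (l ++ [x, y]) ↔ IsReduced (l ++ [x]) ∧ (x.1 = y.1 → x.2 = y.2) := by
  unfold FreeGroup.IsReduced
  rw [List.isChain_append_cons_cons]
  simp

theorem red_left {l l' : List (Bool × Bool)} (h : IsReduced (l ++ l')) : IsReduced l :=
  h.infix (List.prefix_append l l').isInfix

/-- The Nielsen homomorphism `a ↦ a b^e`, `b ↦ b`. -/
structure Good (e : Bool) (θ : FB →* FB) : Prop where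
  ha : θ (mk [La]) = mk [La] * mk [(false, e)]
  hA : θ (mk [LA]) = mk [(false, !e)] * mk [LA]
  hb : ∀ c, θ (mk [(false, c)]) = mk [(false, c)]

def R (θ : FB →* FB) (w : List (Bool × Bool)) : List (Bool × Bool) := (θ (mk w)).toWord
def N (e : Bool) (θ : FB →* FB) (w : List (Bool × Bool)) : List (Bool × Bool) :=
  (θ (mk w) * mk [(false, !e)]).toWord

theorem cancel (g : FB) (c : Bool) : g * mk [(false, c)] * mk [(false, !c)] = g := by
  have : mk [(false, c)] * mk [(false, !c)] = (1 : FB) := by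
    rw [mul_mk]; cases c <;> decide
  rw [mul_assoc, this, mul_one]

theorem cancel' (g : FB) (c : Bool) : g * mk [(false, !c)] * mk [(false, c)] = g := by
  have := cancel g (!c); simpa using this

variable {e : Bool} {θ : FB →* FB}

theorem R_snoc (w x) : θ (mk (w ++ [x])) = θ (mk w) * θ (mk [x]) := by
  rw [← mul_mk, _root_.map_mul]

theorem step_a (G : Good e θ) {w} (h : IsReduced (R θ w ++ [La])) :
    R θ (w ++ [La]) = R θ w ++ [La, (false, e)] ∧ N e θ (w ++ [La]) = R θ w ++ [La] := by
  unfold R N at *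
  have h2 := app h
  rw [R_snoc, G.ha, ← mul_assoc, cancel, h2]
  refine ⟨?_, rfl⟩
  rw [app, h2]
  · simp
  · rw [h2, List.append_assoc]; exact red_snoc2.2 ⟨h, by simp⟩

theorem step_A (G : Good e θ) {w} (h : IsReduced (N e θ w ++ [LA])) :
    R θ (w ++ [LA]) = N e θ w ++ [LA] ∧ N e θ (w ++ [LA]) = N e θ w ++ [LA, (false, !e)] := by
  unfold R N at *
  have h2 := app h
  rw [R_snoc, G.hA, ← mul_assoc, h2]
  refine ⟨rfl, ?_⟩
  rw [app, h2]
  · simp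
  · rw [h2, List.append_assoc]; exact red_snoc2.2 ⟨h, by simp⟩

theorem step_b (G : Good e θ) {w} (h : IsReduced (R θ w ++ [(false, e)])) :
    R θ (w ++ [(false, e)]) = R θ w ++ [(false, e)] ∧ N e θ (w ++ [(false, e)]) = R θ w := by
  unfold R N at *
  rw [R_snoc, G.hb, cancel, app h]
  exact ⟨rfl, rfl⟩

theorem step_B (G : Good e θ) {w} (h : IsReduced (N e θ w ++ [(false, !e)])) :
    R θ (w ++ [(false, !e)]) = N e θ w ∧
      N e θ (w ++ [(false, !e)]) = N e θ w ++ [(false, !e)] := by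
  unfold R N at *
  rw [R_snoc, G.hb, app h]
  exact ⟨rfl, rfl⟩

def E (e : Bool) (θ : FB →* FB) (w : List (Bool × Bool)) : Prop :=
  (IsReduced (w ++ [La]) → IsReduced (R θ w ++ [La])) ∧
  (IsReduced (w ++ [LA]) → IsReduced (N e θ w ++ [LA])) ∧
  (IsReduced (w ++ [(false, e)]) → IsReduced (R θ w ++ [(false, e)]) ∧
    IsReduced (R θ w ++ [LA])) ∧
  (IsReduced (w ++ [(false, !e)]) → IsReduced (N e θ w ++ [(false, !e)]) ∧
    IsReduced (N e θ w ++ [La]))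

theorem letter_cases (e : Bool) (x : Bool × Bool) :
    x = La ∨ x = LA ∨ x = (false, e) ∨ x = (false, !e) := by
  revert e x; decide

theorem E_all (G : Good e θ) (w : List (Bool × Bool)) (hw : IsReduced w) : E e θ w := by
  induction w using List.reverseRecOn with
  | nil =>
    have h1 : R θ [] = [] := by
      unfold R; rw [← one_eq_mk, _root_.map_one, toWord_one]
    have h2 : N e θ [] = [(false, !e)] := by
      unfold N; rw [← one_eq_mk, _root_.map_one, one_mul]; rfl
    unfold E
    rw [h1, h2]
    simp [FreeGroup.IsReduced]
  | append_singleton w x ih =>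
    obtain ⟨i1, i2, i3, i4⟩ := ih (red_left hw)
    unfold E
    rcases letter_cases e x with rfl | rfl | rfl | rfl
    · have h := i1 hw
      obtain ⟨r, n⟩ := step_a G h
      rw [r, n]
      have h' : IsReduced (R θ w ++ [La] ++ [(false, e)]) := by
        rw [List.append_assoc]; exact red_snoc2.2 ⟨h, by simp⟩
      rw [show R θ w ++ [La, (false, e)] = R θ w ++ [La] ++ [(false, e)] by simp]
      generalize hS : R θ w ++ [La] = S at h'
      subst hS
      simp only [List.append_assoc, List.cons_append, List.nil_append] at h' ⊢
      have h3 : ∀ y : Bool × Bool, ((false, e).1 = y.1 → (false, e).2 = y.2) →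
        IsReduced (R θ w ++ [La, (false, e), y]) := by
        intro y hy
        have := (red_snoc2 (l := R θ w ++ [La]) (x := (false, e)) (y := y)).2 ⟨by simpa using h', hy⟩
        simpa using this
      refine ⟨fun _ => h3 _ (by simp), fun q => ?_, fun _ => ⟨h3 _ (by simp), h3 _ (by simp)⟩,
        fun _ => ⟨red_snoc2.2 ⟨h, by simp⟩, red_snoc2.2 ⟨h, by simp⟩⟩⟩
      have := (red_snoc2.1 q).2; simp at this
    · have h := i2 hw
      obtain ⟨r, n⟩ := step_A G h
      rw [r, n]
      have h' : IsReduced (N e θ w ++ [LA] ++ [(false, !e)]) := by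
        rw [List.append_assoc]; exact red_snoc2.2 ⟨h, by simp⟩
      have h3 : ∀ y : Bool × Bool, ((false, !e).1 = y.1 → (false, !e).2 = y.2) →
        IsReduced (N e θ w ++ [LA, (false, !e)] ++ [y]) := by
        intro y hy
        have := (red_snoc2 (l := N e θ w ++ [LA]) (x := (false, !e)) (y := y)).2 ⟨h', hy⟩
        simpa using this
      simp only [List.append_assoc, List.cons_append, List.nil_append] at h3 ⊢
      refine ⟨fun q => ?_, fun _ => h3 _ (by simp), fun _ => ⟨red_snoc2.2 ⟨h, by simp⟩,
        red_snoc2.2 ⟨h, by simp⟩⟩, fun _ => ⟨h3 _ (by simp), h3 _ (by simp)⟩⟩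
      have := (red_snoc2.1 q).2; simp at this
    · obtain ⟨h, h2⟩ := i3 hw
      obtain ⟨r, n⟩ := step_b G h
      rw [r, n]
      simp only [List.append_assoc, List.cons_append, List.nil_append]
      refine ⟨fun _ => red_snoc2.2 ⟨h, by simp⟩, fun _ => h2, fun _ => ⟨red_snoc2.2 ⟨h, by simp⟩,
        red_snoc2.2 ⟨h, by simp⟩⟩, fun q => ?_⟩
      have := (red_snoc2.1 q).2; simp at this
    · obtain ⟨h, h2⟩ := i4 hw
      obtain ⟨r, n⟩ := step_B G h
      rw [r, n]
      simp only [List.append_assoc, List.cons_append, List.nil_append]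
      refine ⟨fun _ => h2, fun _ => red_snoc2.2 ⟨h, by simp⟩, fun q => ?_,
        fun _ => ⟨red_snoc2.2 ⟨h, by simp⟩, red_snoc2.2 ⟨h, by simp⟩⟩⟩
      have := (red_snoc2.1 q).2; simp at this

/-- Prefix statement: the finite form of the fundamental formulas. -/
theorem fwd (G : Good e θ) (v : List (Bool × Bool)) : ∀ (w : List (Bool × Bool)) (x : Bool × Bool),
    IsReduced (w ++ x :: v) →
    (x = La → R θ w ++ [La] <+: R θ (w ++ x :: v)) ∧
    (x = LA → N e θ w ++ [LA] <+: R θ (w ++ x :: v)) ∧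
    (x = (false, e) → R θ w ++ [(false, e)] <+: R θ (w ++ x :: v) ∨
      R θ w ++ [LA] <+: R θ (w ++ x :: v)) ∧
    (x = (false, !e) → N e θ w <+: R θ (w ++ x :: v) ∧ (v ≠ [] →
      N e θ w ++ [(false, !e)] <+: R θ (w ++ x :: v) ∨
      N e θ w ++ [La] <+: R θ (w ++ x :: v))) := by
  induction v with
  | nil =>
    intro w x hr
    obtain ⟨i1, i2, i3, i4⟩ := E_all G w (red_left hr)
    refine ⟨?_, ?_, ?_, ?_⟩ <;> rintro rfl
    · rw [(step_a G (i1 hr)).1]; exact ⟨[(false, e)], by simp⟩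
    · rw [(step_A G (i2 hr)).1]
    · rw [(step_b G (i3 hr).1).1]; left; exact List.prefix_rfl
    · rw [(step_B G (i4 hr).1).1]; exact ⟨List.prefix_rfl, fun h => absurd rfl h⟩
  | cons y v ih =>
    intro w x hr
    obtain ⟨i1, i2, i3, i4⟩ := E_all G w (red_left hr)
    have hr1 : IsReduced (w ++ [x] ++ y :: v) := by simpa using hr
    have hr2 := red_left hr1
    have hr3 : IsReduced (w ++ [x, y]) := by
      apply red_left (l' := v); simpa using hr
    have hxy := (red_snoc2.1 hr3).2
    obtain ⟨j1, j2, j3, j4⟩ := ih (w ++ [x]) y hr1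
    rw [show w ++ x :: y :: v = w ++ [x] ++ y :: v by simp]
    generalize R θ (w ++ [x] ++ y :: v) = X at *
    refine ⟨?_, ?_, ?_, ?_⟩ <;> rintro rfl
    · obtain ⟨r, n⟩ := step_a G (i1 hr2)
      rw [r] at j1 j3
      rw [n] at j2 j4
      have hp : ∀ l, R θ w ++ [La] <+: R θ w ++ [La, (false, e)] ++ l :=
        fun l => ⟨(false, e) :: l, by simp⟩
      rcases letter_cases e y with hy | hy | hy | hy
      · exact (hp _).trans (j1 hy)
      · subst hy; simp at hxy
      · rcases j3 hy with h | h <;> exact (hp _).trans h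
      · exact (j4 hy).1
    · obtain ⟨r, n⟩ := step_A G (i2 hr2)
      rw [r] at j1 j3
      rw [n] at j2 j4
      have hp : ∀ l, N e θ w ++ [LA] <+: N e θ w ++ [LA, (false, !e)] ++ l :=
        fun l => ⟨(false, !e) :: l, by simp⟩
      rcases letter_cases e y with hy | hy | hy | hy
      · subst hy; simp at hxy
      · exact (hp _).trans (j2 hy)
      · rcases j3 hy with h | h <;> exact (List.prefix_append _ _).trans h
      · have := (hp []); rw [List.append_nil] at this; exact this.trans (j4 hy).1
    · obtain ⟨r, n⟩ := step_b G (i3 hr2).1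
      rw [r] at j1 j3
      rw [n] at j2 j4
      rcases letter_cases e y with hy | hy | hy | hy
      · exact Or.inl ((List.prefix_append _ _).trans (j1 hy))
      · exact Or.inr (j2 hy)
      · left; rcases j3 hy with h | h <;> exact (List.prefix_append _ _).trans h
      · subst hy; simp at hxy
    · obtain ⟨r, n⟩ := step_B G (i4 hr2).1
      rw [r] at j1 j3
      rw [n] at j2 j4
      have key : N e θ w ++ [(false, !e)] <+: X ∨ N e θ w ++ [La] <+: X := by
        rcases letter_cases e y with hy | hy | hy | hy
        · exact Or.inr (j1 hy)
        · left; exact (List.prefix_append _ _).trans (j2 hy)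
        · subst hy; simp at hxy
        · left; exact (j4 hy).1
      refine ⟨?_, fun _ => key⟩
      rcases key with h | h <;> exact (List.prefix_append _ _).trans h

theorem norm_letter (x : Bool × Bool) : norm (mk [x] : FB) ≤ 1 := norm_mk_le

theorem norm_le (G : Good e θ) (w : List (Bool × Bool)) : norm (θ (mk w)) ≤ 2 * w.length := by
  induction w using List.reverseRecOn with
  | nil => rw [← one_eq_mk, _root_.map_one]; simp
  | append_singleton w x ih =>
    rw [R_snoc]
    have h1 := norm_mul_le (θ (mk w)) (θ (mk [x]))
    have h2 : norm (θ (mk [x])) ≤ 2 := by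
      rcases letter_cases e x with rfl | rfl | rfl | rfl
      · rw [G.ha]
        have := norm_mul_le (mk [La]) (mk [(false, e)])
        have := norm_letter La
        have := norm_letter (false, e)
        omega
      · rw [G.hA]
        have := norm_mul_le (mk [(false, !e)]) (mk [LA])
        have := norm_letter LA
        have := norm_letter (false, !e)
        omega
      · rw [G.hb]; exact (norm_letter _).trans (by norm_num)
      · rw [G.hb]; exact (norm_letter _).trans (by norm_num)
    simp only [List.length_append, List.length_singleton]
    omega

/-- Bounded cancellation. -/
theorem stab {θ' : FB →* FB} {e' : Bool} (G : Good e θ) (G' : Good e' θ')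
    (hinv : ∀ g, θ' (θ g) = g) (u : List (Bool × Bool)) (hu : IsReduced u) :
    ∃ M : List (Bool × Bool), u.length ≤ 2 * M.length + 4 ∧
      ∀ v, IsReduced (u ++ v) → M <+: R θ (u ++ v) := by
  induction u using List.reverseRecOn with
  | nil => exact ⟨[], by simp, by simp⟩
  | append_singleton w x _ =>
    have hlen : w.length ≤ 2 * (R θ w).length := by
      have := norm_le G' (R θ w)
      unfold R at *
      rw [mk_toWord, hinv, FreeGroup.norm, toWord_mk, (red_left hu).reduce_eq] at this
      exact this
    have hN : (R θ w).length ≤ (N e θ w).length + 1 := by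
      have := norm_mul_le (θ (mk w) * mk [(false, !e)]) (mk [(false, e)])
      rw [cancel'] at this
      have := norm_letter (false, e)
      unfold R N FreeGroup.norm at *
      omega
    have hf : ∀ v, IsReduced (w ++ [x] ++ v) → _ := fun v hv => fwd G v w x (by simpa using hv)
    rcases letter_cases e x with rfl | rfl | rfl | rfl
    · refine ⟨R θ w, by simp; omega, fun v hv => ?_⟩
      have := (hf v hv).1 rfl
      rw [List.append_assoc]
      exact (List.prefix_append _ _).trans this
    · refine ⟨N e θ w, by simp; omega, fun v hv => ?_⟩
      have := (hf v hv).2.1 rfl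
      rw [List.append_assoc]
      exact (List.prefix_append _ _).trans this
    · refine ⟨R θ w, by simp; omega, fun v hv => ?_⟩
      have := (hf v hv).2.2.1 rfl
      rw [List.append_assoc]
      rcases this with h | h <;> exact (List.prefix_append _ _).trans h
    · refine ⟨N e θ w, by simp; omega, fun v hv => ?_⟩
      have := (hf v hv).2.2.2 rfl
      rw [List.append_assoc]
      exact this.1

theorem pre_length (ξ : Bd Bool) (m : ℕ) : (pre ξ m).length = m := by simp [pre]

theorem pre_get (ξ : Bd Bool) (m i : ℕ) (h : i < (pre ξ m).length) : (pre ξ m)[i] = ξ.1 i := by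
  simp [pre]

theorem pre_take (ξ : Bd Bool) {n m : ℕ} (h : n ≤ m) : (pre ξ m).take n = pre ξ n := by
  apply List.ext_getElem
  · simp [pre_length, h]
  · intro i h1 h2
    rw [List.getElem_take, pre_get, pre_get]

theorem pre_prefix (ξ : Bd Bool) {n m : ℕ} (h : n ≤ m) : pre ξ n <+: pre ξ m := by
  rw [← pre_take ξ h]; exact List.take_prefix _ _

theorem ne_linv_iff (x y : Bool × Bool) : y ≠ linv x ↔ (x.1 = y.1 → x.2 = y.2) := by
  revert x y; unfold linv; decide

theorem pre_red (ξ : Bd Bool) (m : ℕ) : IsReduced (pre ξ m) := by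
  unfold FreeGroup.IsReduced
  rw [List.isChain_iff_getElem]
  intro i hi
  rw [pre_get, pre_get]
  exact (ne_linv_iff _ _).1 (ξ.2 i)

theorem mem_Cyl (ξ : Bd Bool) (w : List (Bool × Bool)) : ξ ∈ Cyl w ↔ pre ξ w.length = w := by
  constructor
  · intro h
    apply List.ext_getElem
    · simp [pre_length]
    · intro i h1 h2
      rw [pre_get]; exact h i h2
  · intro h i hi
    have := pre_get ξ w.length i (by rw [pre_length]; exact hi)
    rw [← this]
    simp only [List.get_eq_getElem]
    congr 1

theorem bd_ext {ξ η : Bd Bool} (h : ∀ k, pre ξ k = pre η k) : ξ = η := by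
  apply Subtype.ext
  funext i
  rw [← pre_get ξ (i+1) i (by simp [pre_length]), ← pre_get η (i+1) i (by simp [pre_length])]
  congr 1
  exact h _

def Conv (θ : FB →* FB) (ξ η : Bd Bool) : Prop :=
  ∀ k : ℕ, ∃ n : ℕ, ∀ m, n ≤ m → (R θ (pre ξ m)).take k = pre η k

theorem take_of_prefix {M X : List (Bool × Bool)} (h : M <+: X) {k : ℕ} (hk : k ≤ M.length) :
    X.take k = M.take k := by
  obtain ⟨t, rfl⟩ := h
  rw [List.take_append_of_le_length hk]

theorem stab_take {θ' : FB →* FB} {e' : Bool} (G : Good e θ) (G' : Good e' θ')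
    (hinv : ∀ g, θ' (θ g) = g) (k : ℕ) (u v : List (Bool × Bool)) (hu : IsReduced (u ++ v))
    (hk : 2 * k + 4 ≤ u.length) :
    (R θ (u ++ v)).take k = (R θ u).take k ∧ k ≤ (R θ u).length := by
  obtain ⟨M, hM, h⟩ := stab G G' hinv u (red_left hu)
  have h1 := h v hu
  have h2 := h [] (by simpa using red_left hu)
  rw [List.append_nil] at h2
  rw [take_of_prefix h1 (by omega), take_of_prefix h2 (by omega)]
  exact ⟨rfl, le_trans (by omega) h2.length_le⟩

theorem pre_stab {θ' : FB →* FB} {e' : Bool} (G : Good e θ) (G' : Good e' θ')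
    (hinv : ∀ g, θ' (θ g) = g) (ξ : Bd Bool) (k n m : ℕ) (hn : 2 * k + 4 ≤ n) (hm : n ≤ m) :
    (R θ (pre ξ m)).take k = (R θ (pre ξ n)).take k ∧ k ≤ (R θ (pre ξ n)).length := by
  obtain ⟨v, hv⟩ := pre_prefix ξ hm
  rw [← hv]
  apply stab_take G G' hinv k
  · rw [hv]; exact pre_red _ _
  · rw [pre_length]; exact hn

theorem R_red (w) : IsReduced (R θ w) := isReduced_toWord

theorem conv_exists {θ' : FB →* FB} {e' : Bool} (G : Good e θ) (G' : Good e' θ')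
    (hinv : ∀ g, θ' (θ g) = g) (ξ : Bd Bool) : ∃ η, Conv θ ξ η := by
  have hlen : ∀ i, i < (R θ (pre ξ (2 * (i + 1) + 4))).length := fun i =>
    (pre_stab G G' hinv ξ (i + 1) _ _ le_rfl le_rfl).2
  let f : ℕ → Bool × Bool := fun i => (R θ (pre ξ (2 * (i + 1) + 4)))[i]'(hlen i)
  have hf : ∀ i m, 2 * (i + 1) + 4 ≤ m → ∀ h : i < (R θ (pre ξ m)).length,
      (R θ (pre ξ m))[i] = f i := by
    intro i m hm h
    have := (pre_stab G G' hinv ξ (i + 1) _ m le_rfl hm).1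
    have h1 : ((R θ (pre ξ m)).take (i + 1))[i]'(by simp; omega) = (R θ (pre ξ m))[i] := by
      rw [List.getElem_take]
    have h2 : ((R θ (pre ξ (2 * (i + 1) + 4))).take (i + 1))[i]'(by
      have := hlen i
      simp only [List.length_take]; omega) = f i := by
      rw [List.getElem_take]
    rw [← h1, ← h2]
    congr 1
  have hred : ∀ n, f (n + 1) ≠ linv (f n) := by
    intro n
    have hr := List.isChain_iff_getElem.1 (R_red (θ := θ) (pre ξ (2 * (n + 1 + 1) + 4)))
    have h := hr n (hlen (n + 1))
    rw [hf n _ (by omega), hf (n + 1) _ (by omega)] at h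
    exact (ne_linv_iff _ _).2 h
  obtain ⟨η, hη⟩ : ∃ η : Bd Bool, η.1 = f := ⟨⟨f, hred⟩, rfl⟩
  refine ⟨η, fun k => ⟨2 * k + 4, fun m hm => ?_⟩⟩
  · have hk := (pre_stab G G' hinv ξ k m m hm le_rfl).2
    apply List.ext_getElem
    · rw [pre_length, List.length_take]; omega
    · intro i h1 h2
      rw [pre_length] at h2
      rw [List.getElem_take, pre_get, hf i m (by omega), hη]

theorem conv_inv {ψ : FB →* FB} {e' : Bool} (G : Good e θ) (G' : Good e' ψ)
    (h1 : ∀ g, ψ (θ g) = g) (h2 : ∀ g, θ (ψ g) = g) {ξ ζ η : Bd Bool}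
    (hξ : Conv ψ η ξ) (hζ : Conv θ ξ ζ) : ζ = η := by
  apply bd_ext
  intro k
  obtain ⟨n, hn⟩ := hζ k
  let m := max n (2 * k + 4)
  obtain ⟨p, hp⟩ := hξ m
  let q := max p k
  have hq := hp q (le_max_left _ _)
  have hm := hn m (le_max_left _ _)
  have hpre : pre ξ m <+: R ψ (pre η q) := by rw [← hq]; exact List.take_prefix _ _
  obtain ⟨v, hv⟩ := hpre
  have := (stab_take G G' h1 k (pre ξ m) v (by rw [hv]; exact R_red _)
    (by rw [pre_length]; exact le_max_right _ _)).1
  rw [← hm, ← this, hv]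
  unfold R
  rw [mk_toWord, h2, toWord_mk, (pre_red η q).reduce_eq, pre_take η (le_max_right _ _)]

theorem core {ψ : FB →* FB} {e' : Bool} (G : Good e θ) (G' : Good e' ψ)
    (h1 : ∀ g, ψ (θ g) = g) (h2 : ∀ g, θ (ψ g) = g)
    (Φ : Bd Bool → Bd Bool) (hΦ : ∀ ξ, Conv θ ξ (Φ ξ)) (w : List (Bool × Bool))
    (g : FB) (Y : Finset (Bool × Bool)) (hY : ∀ y ∈ Y, IsReduced (g.toWord ++ [y]))
    (hf : ∀ v, v ≠ [] → IsReduced (w ++ v) → ∃ y ∈ Y, g.toWord ++ [y] <+: R θ (w ++ v))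
    (hb : ∀ y ∈ Y, ∀ v, IsReduced (g.toWord ++ y :: v) → w <+: R ψ (g.toWord ++ y :: v)) :
    ∃ U : Finset FB, U.card = Y.card ∧ Φ '' Cyl w = (⋃ u ∈ U, Cyl u.toWord) ∧
      ∀ u₁ ∈ U, ∀ u₂ ∈ U, u₁ ≠ u₂ → Cyl u₁.toWord ∩ Cyl u₂.toWord = ∅ := by
  have hw : ∀ y ∈ Y, (g * mk [y]).toWord = g.toWord ++ [y] := fun y hy => app (hY y hy)
  refine ⟨Y.image (fun y => g * mk [y]), ?_, ?_, ?_⟩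
  · apply Finset.card_image_of_injOn
    intro y hy z hz hyz
    have : (g * mk [y]).toWord = (g * mk [z]).toWord := congrArg toWord hyz
    rw [hw y hy, hw z hz] at this
    simpa using this
  · ext η
    simp only [Set.mem_image, Set.mem_iUnion, Finset.mem_image, exists_prop,
      exists_exists_and_eq_and]
    constructor
    · rintro ⟨ξ, hξ, rfl⟩
      rw [mem_Cyl] at hξ
      obtain ⟨n, hn⟩ := hΦ ξ (g.toWord.length + 1)
      let m := max n (w.length + 1)
      have hm := hn m (le_max_left _ _)
      have hwm : w.length + 1 ≤ m := le_max_right _ _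
      obtain ⟨v, hv⟩ := pre_prefix ξ (show w.length ≤ m by omega)
      rw [hξ] at hv
      have hlen := congrArg List.length hv
      rw [pre_length, List.length_append] at hlen
      have hv0 : v ≠ [] := by
        rintro rfl
        rw [List.length_nil] at hlen
        omega
      obtain ⟨y, hy, hp⟩ := hf v hv0 (by rw [hv]; exact pre_red _ _)
      refine ⟨y, hy, ?_⟩
      rw [mem_Cyl, hw y hy, List.length_append, List.length_singleton, ← hm, ← hv,
        take_of_prefix hp (by simp)]
      apply List.take_of_length_le; simp
    · rintro ⟨y, hy, hη⟩
      rw [mem_Cyl, hw y hy] at hη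
      obtain ⟨ξ, hξ⟩ := conv_exists G' G h2 η
      refine ⟨ξ, ?_, conv_inv G G' h1 h2 hξ (hΦ ξ)⟩
      rw [mem_Cyl]
      obtain ⟨n, hn⟩ := hξ w.length
      let m := max n (g.toWord ++ [y]).length
      rw [← hn m (le_max_left _ _)]
      obtain ⟨v, hv⟩ := pre_prefix η (show (g.toWord ++ [y]).length ≤ m from le_max_right _ _)
      rw [hη, List.append_assoc] at hv
      have := hb y hy v (by have := pre_red η m; rw [← hv] at this; exact this)
      rw [← hv]
      rw [List.singleton_append, take_of_prefix this le_rfl, List.take_length]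
  · intro u hu u' hu' hne
    obtain ⟨y, hy, rfl⟩ := Finset.mem_image.1 hu
    obtain ⟨z, hz, rfl⟩ := Finset.mem_image.1 hu'
    rw [Set.eq_empty_iff_forall_notMem]
    rintro ξ ⟨a, b⟩
    apply hne
    rw [mem_Cyl] at a b
    apply toWord_injective
    rw [← a, ← b, hw y hy, hw z hz]
    simp

theorem main {ψ : FB →* FB} (G : Good e θ) (G' : Good (!e) ψ)
    (h1 : ∀ g, ψ (θ g) = g) (h2 : ∀ g, θ (ψ g) = g)
    (Φ : Bd Bool → Bd Bool) (hΦ : ∀ ξ, Conv θ ξ (Φ ξ)) (w : List (Bool × Bool))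
    (x : Bool × Bool) (hr : IsReduced (w ++ [x])) :
    ∃ U : Finset FB, U.card = (if x.1 then 1 else 2) ∧
      Φ '' Cyl (w ++ [x]) = (⋃ u ∈ U, Cyl u.toWord) ∧
      ∀ u₁ ∈ U, ∀ u₂ ∈ U, u₁ ≠ u₂ → Cyl u₁.toWord ∩ Cyl u₂.toWord = ∅ := by
  obtain ⟨i1, i2, i3, i4⟩ := E_all G w (red_left hr)
  have F := fun v (hv : IsReduced (w ++ [x] ++ v)) => fwd G v w x (by simpa using hv)
  have B := fun v u y => fwd G' v u y
  have hwW : (mk w : FB).toWord = w := by rw [toWord_mk, (red_left hr).reduce_eq]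
  have hRR : R ψ (R θ w) = w := by unfold R; rw [mk_toWord, h1, hwW]
  have hRN : R ψ (N e θ w) = (mk w * mk [(false, !e)]).toWord := by
    unfold R N; rw [mk_toWord, _root_.map_mul, h1, G'.hb]
  have hNR : N (!e) ψ (R θ w) = (mk w * mk [(false, e)]).toWord := by
    unfold R N; rw [mk_toWord, h1, Bool.not_not]
  have hNN : N (!e) ψ (N e θ w) = w := by
    unfold N; rw [mk_toWord, _root_.map_mul, h1, G'.hb, cancel, hwW]
  have hx : (mk w * mk [x]).toWord = w ++ [x] := by
    rw [app (by rw [hwW]; exact hr), hwW]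
  simp only [Bool.not_not] at B
  rcases letter_cases e x with rfl | rfl | rfl | rfl
  · refine core G G' h1 h2 Φ hΦ _ (θ (mk w)) {La} ?_ ?_ ?_
    · simpa [R, N] using i1 hr
    · intro v _ hv
      exact ⟨La, by simp, by simpa [R, N] using (F v hv).1 rfl⟩
    · intro y hy v hv
      rw [Finset.mem_singleton] at hy; subst hy
      have := (B v _ _ hv).1 rfl
      change R ψ (R θ w) ++ _ <+: _ at this
      rwa [hRR] at this
  · refine core G G' h1 h2 Φ hΦ _ (θ (mk w) * mk [(false, !e)]) {LA} ?_ ?_ ?_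
    · simpa [R, N] using i2 hr
    · intro v _ hv
      exact ⟨LA, by simp, by simpa [R, N] using (F v hv).2.1 rfl⟩
    · intro y hy v hv
      rw [Finset.mem_singleton] at hy; subst hy
      have := (B v _ _ hv).2.1 rfl
      change N (!e) ψ (N e θ w) ++ _ <+: _ at this
      rwa [hNN] at this
  · refine core G G' h1 h2 Φ hΦ _ (θ (mk w)) {(false, e), LA} ?_ ?_ ?_
    · simpa [R, N] using i3 hr
    · intro v _ hv
      rcases (F v hv).2.2.1 rfl with h | h
      · exact ⟨(false, e), by simp, by simpa [R, N] using h⟩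
      · exact ⟨LA, by simp, by simpa [R, N] using h⟩
    · intro y hy v hv
      rw [Finset.mem_insert, Finset.mem_singleton] at hy
      rcases hy with rfl | rfl
      · have := ((B v _ _ hv).2.2.2 rfl).1
        change N (!e) ψ (R θ w) <+: _ at this
        rwa [hNR, hx] at this
      · have := (B v _ _ hv).2.1 rfl
        change N (!e) ψ (R θ w) ++ _ <+: _ at this
        rw [hNR, hx] at this
        exact (List.prefix_append _ _).trans this
  · refine core G G' h1 h2 Φ hΦ _ (θ (mk w) * mk [(false, !e)]) {(false, !e), La} ?_ ?_ ?_
    · simpa [R, N] using i4 hr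
    · intro v hv0 hv
      rcases ((F v hv).2.2.2 rfl).2 hv0 with h | h
      · exact ⟨(false, !e), by simp, by simpa [R, N] using h⟩
      · exact ⟨La, by simp, by simpa [R, N] using h⟩
    · intro y hy v hv
      rw [Finset.mem_insert, Finset.mem_singleton] at hy
      have key : R ψ (N e θ w) <+: R ψ ((θ (mk w) * mk [(false, !e)]).toWord ++ y :: v) := by
        rcases hy with rfl | rfl
        · rcases (B v _ _ hv).2.2.1 rfl with h | h <;> exact (List.prefix_append _ _).trans h
        · exact (List.prefix_append _ _).trans ((B v _ _ hv).1 rfl)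
      rwa [hRN, hx] at key

end NielsenAux

/-- For the Nielsen automorphism of `F₂` and a reduced word `w` ending in letter `x`,
`φ(C¹_w)` is a disjoint union of exactly `n(x)` cylinders, where
`n(a) = n(a⁻¹) = 1` and `n(b) = n(b⁻¹) = 2`. -/
theorem stmt17 (φ : FreeGroup Bool ≃* FreeGroup Bool)
    (hφa : φ (FreeGroup.of true) = FreeGroup.of true * FreeGroup.of false)
    (hφb : φ (FreeGroup.of false) = FreeGroup.of false)
    (Φ : Bd Bool → Bd Bool) (hΦ : ExtendsBd φ Φ)
    (w : FreeGroup Bool) (hw : w.toWord ≠ []) :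
    ∃ U : Finset (FreeGroup Bool),
      U.card = (if (w.toWord.getLast hw).1 then 1 else 2) ∧
      Φ '' Cyl w.toWord = (⋃ u ∈ U, Cyl u.toWord) ∧
      ∀ u₁ ∈ U, ∀ u₂ ∈ U, u₁ ≠ u₂ → Cyl u₁.toWord ∩ Cyl u₂.toWord = ∅ := by
  have ea : (mk [(true, true)] : FreeGroup Bool) = of true := rfl
  have eA : (mk [(true, false)] : FreeGroup Bool) = (of true)⁻¹ := rfl
  have eb : (mk [(false, true)] : FreeGroup Bool) = of false := rfl
  have eB : (mk [(false, false)] : FreeGroup Bool) = (of false)⁻¹ := rfl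
  have sb : φ.symm (of false) = of false := by rw [MulEquiv.symm_apply_eq, hφb]
  have sa : φ.symm (of true) = of true * (of false)⁻¹ := by
    rw [MulEquiv.symm_apply_eq, _root_.map_mul, _root_.map_inv, hφa, hφb]; group
  have G : NielsenAux.Good true φ.toMonoidHom := by
    refine ⟨?_, ?_, ?_⟩
    · change φ (mk [(true, true)]) = mk [(true, true)] * mk [(false, true)]
      rw [ea, eb, hφa]
    · change φ (mk [(true, false)]) = mk [(false, false)] * mk [(true, false)]
      rw [eA, eB, _root_.map_inv, hφa, mul_inv_rev]
    · intro c
      change φ (mk [(false, c)]) = _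
      cases c
      · rw [eB, _root_.map_inv, hφb]
      · rw [eb, hφb]
  have G' : NielsenAux.Good (!true) φ.symm.toMonoidHom := by
    refine ⟨?_, ?_, ?_⟩
    · change φ.symm (mk [(true, true)]) = mk [(true, true)] * mk [(false, false)]
      rw [ea, eB, sa]
    · change φ.symm (mk [(true, false)]) = mk [(false, true)] * mk [(true, false)]
      rw [eA, eb, _root_.map_inv, sa, mul_inv_rev, inv_inv]
    · intro c
      change φ.symm (mk [(false, c)]) = _
      cases c
      · rw [eB, _root_.map_inv, sb]
      · rw [eb, sb]
  have h := NielsenAux.main G G' (fun g => φ.symm_apply_apply g) (fun g => φ.apply_symm_apply g)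
    Φ hΦ w.toWord.dropLast (w.toWord.getLast hw)
    (by rw [List.dropLast_append_getLast]; exact isReduced_toWord)
  rw [List.dropLast_append_getLast] at h
  exact h
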